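/- arXiv:1304.3373 — 2 statements merged into one kernel-verified Lean document; each statement's English description precedes it below -/
import Mathlib

section
/- Let G be an abelian p-group and H = ⊕ᵢ₌₁ⁿ Hᵢ a finite subgroup with each Hᵢ cyclic. Then every homomorphism H → G extends to an endomorphism of G if and only if (a) every homomorphism Hᵢ → G extends to an endomorphism of G for each i, and (b) the direct sum ⊕ Hᵢ is a valuated direct sum with respect to the height function of G (i.e., h(x₁ + ⋯ + xₙ) = min h(xᵢ) for xᵢ ∈ Hᵢ). -/
open AddSubgroup

/-- The `p`-height of an element, as an extended natural number. -/
noncomputable def pHeight (p : ℕ) {G : Type*} [AddCommGroup G] (x : G) : ℕ∞ :=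
  sSup {n : ℕ∞ | ∃ m : ℕ, n = (m : ℕ∞) ∧ ∃ y : G, p ^ m • y = x}

/-- `G` is an abelian `p`-group. -/
def IsPGrp (p : ℕ) (G : Type*) [AddCommGroup G] : Prop :=
  ∀ x : G, ∃ n : ℕ, p ^ n • x = 0

/-- `H ∈ Q(G)`: every homomorphism `H → G` extends to an endomorphism of `G`. -/
def InQ {G : Type*} [AddCommGroup G] (H : AddSubgroup G) : Prop :=
  ∀ f : H →+ G, ∃ g : G →+ G, ∀ x : H, g x = f x

/-- `H ∈ P(G)`: every monomorphism `H → G` extends to an endomorphism of `G`. -/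
def InP {G : Type*} [AddCommGroup G] (H : AddSubgroup G) : Prop :=
  ∀ f : H →+ G, Function.Injective f → ∃ g : G →+ G, ∀ x : H, g x = f x

/-- `H ∈ W(G)`: every endomorphism of `H` extends to an endomorphism of `G`. -/
def InW {G : Type*} [AddCommGroup G] (H : AddSubgroup G) : Prop :=
  ∀ f : H →+ H, ∃ g : G →+ G, ∀ x : H, g x = (f x : G)

/-- `K` is an internal direct sum of cyclic subgroups. -/
def IsDirectSumOfCyclics {G : Type*} [AddCommGroup G] (K : AddSubgroup G) : Prop :=
  ∃ (ι : Type) (a : ι → G), (∀ i, a i ∈ K) ∧ (⨆ i, zmultiples (a i)) = K ∧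
    iSupIndep (fun i => zmultiples (a i))

/-- `K` is a `p`-pure subgroup: `pⁿG ∩ K = pⁿK`. -/
def IsPure (p : ℕ) {G : Type*} [AddCommGroup G] (K : AddSubgroup G) : Prop :=
  ∀ n : ℕ, ∀ x ∈ K, (∃ y : G, p ^ n • y = x) → ∃ z ∈ K, p ^ n • z = x

/-- The quotient `G/K` is divisible (equivalently `G = K + pG`). -/
def QuotDivisible (p : ℕ) {G : Type*} [AddCommGroup G] (K : AddSubgroup G) : Prop :=
  ∀ x : G, ∃ y : G, x - p • y ∈ K

/-- The Ulm sequence of `x` has a gap before index `k` (with `h₋₁ = -1`). -/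
def HasGapBefore (p : ℕ) {G : Type*} [AddCommGroup G] (x : G) (k : ℕ) : Prop :=
  if k = 0 then 0 < pHeight p x
  else pHeight p (p ^ (k - 1) • x) + 1 < pHeight p (p ^ k • x)


section Helpers

/-- `x` is divisible by `p ^ m`. -/
def PDvd (p m : ℕ) {G : Type*} [AddCommGroup G] (x : G) : Prop := ∃ y : G, p ^ m • y = x

lemma PDvd.mono {p m m' : ℕ} {G : Type*} [AddCommGroup G] {x : G} (h : PDvd p m x)
    (hm : m' ≤ m) : PDvd p m' x := by
  obtain ⟨y, rfl⟩ := h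
  exact ⟨p ^ (m - m') • y, by rw [smul_smul, ← pow_add]; congr 2; omega⟩

lemma PDvd.add {p m : ℕ} {G : Type*} [AddCommGroup G] {x y : G} (h : PDvd p m x)
    (h' : PDvd p m y) : PDvd p m (x + y) := by
  obtain ⟨a, rfl⟩ := h
  obtain ⟨b, rfl⟩ := h'
  exact ⟨a + b, by rw [smul_add]⟩

lemma PDvd.sub {p m : ℕ} {G : Type*} [AddCommGroup G] {x y : G} (h : PDvd p m x)
    (h' : PDvd p m y) : PDvd p m (x - y) := by
  obtain ⟨a, rfl⟩ := h
  obtain ⟨b, rfl⟩ := h'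
  exact ⟨a - b, by rw [smul_sub]⟩

lemma PDvd.zsmul {p m : ℕ} {G : Type*} [AddCommGroup G] {x : G} (h : PDvd p m x)
    (c : ℤ) : PDvd p m (c • x) := by
  obtain ⟨a, rfl⟩ := h
  exact ⟨c • a, by rw [smul_comm]⟩

lemma PDvd.nsmul {p m : ℕ} {G : Type*} [AddCommGroup G] {x : G} (h : PDvd p m x)
    (c : ℕ) : PDvd p m (c • x) := by
  obtain ⟨a, rfl⟩ := h
  exact ⟨c • a, by rw [smul_comm]⟩

lemma PDvd.map {p m : ℕ} {G : Type*} [AddCommGroup G] {x : G} (h : PDvd p m x)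
    (g : G →+ G) : PDvd p m (g x) := by
  obtain ⟨a, rfl⟩ := h
  exact ⟨g a, by rw [map_nsmul]⟩

lemma PDvd.zero {p m : ℕ} {G : Type*} [AddCommGroup G] : PDvd p m (0 : G) := ⟨0, smul_zero _⟩

lemma PDvd.sum {p m : ℕ} {G : Type*} [AddCommGroup G] {n : ℕ} {c : Fin n → G}
    (h : ∀ i, PDvd p m (c i)) : PDvd p m (∑ i, c i) := by
  choose a ha using h
  exact ⟨∑ i, a i, by rw [Finset.smul_sum]; simp only [ha]⟩

lemma le_pHeight_iff (p m : ℕ) {G : Type*} [AddCommGroup G] (x : G) :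
    (m : ℕ∞) ≤ pHeight p x ↔ PDvd p m x := by
  constructor
  · intro h
    by_contra hc
    cases m with
    | zero => exact hc ⟨x, by simp⟩
    | succ m =>
      have : pHeight p x ≤ m := by
        apply sSup_le
        rintro _ ⟨k, rfl, hk⟩
        have hk : PDvd p k x := hk
        by_contra hlt
        have : m + 1 ≤ k := by
          have : ¬ k ≤ m := fun h => hlt (by exact_mod_cast h)
          omega
        exact hc (hk.mono this)
      have := h.trans this
      have : m + 1 ≤ m := by exact_mod_cast this
      omega
  · intro h
    exact le_sSup ⟨m, rfl, h⟩

lemma pHeight_le_iff (p : ℕ) {G : Type*} [AddCommGroup G] (x : G) (a : ℕ∞) :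
    a ≤ pHeight p x ↔ ∀ m : ℕ, (m : ℕ∞) ≤ a → PDvd p m x := by
  constructor
  · intro h m hm
    exact (le_pHeight_iff p m x).1 (hm.trans h)
  · intro h
    by_contra hc
    push Not at hc
    obtain ⟨k, hk⟩ := ENat.ne_top_iff_exists.1 hc.ne_top
    have h1 : ((k + 1 : ℕ) : ℕ∞) ≤ a := by
      rw [← hk] at hc
      push_cast
      exact Order.add_one_le_of_lt hc
    have := (le_pHeight_iff p _ x).2 (h _ h1)
    rw [← hk] at this
    have : k + 1 ≤ k := by exact_mod_cast this
    omega

lemma pHeight_sum_eq_iff (p : ℕ) {G : Type*} [AddCommGroup G] {n : ℕ} (c : Fin n → G) :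
    pHeight p (∑ i, c i) = ⨅ i, pHeight p (c i) ↔
      ∀ m, PDvd p m (∑ i, c i) → ∀ i, PDvd p m (c i) := by
  constructor
  · intro h m hm i
    rw [← le_pHeight_iff, h] at hm
    exact (le_pHeight_iff _ _ _).1 (hm.trans (iInf_le _ i))
  · intro h
    apply le_antisymm
    · refine le_iInf fun i => ?_
      rw [pHeight_le_iff]
      intro m hm
      exact h m ((le_pHeight_iff _ _ _).1 hm) i
    · rw [pHeight_le_iff]
      intro m hm
      exact PDvd.sum fun i => (le_pHeight_iff _ _ _).1 (hm.trans (iInf_le _ i))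

lemma baer_ext {R Q M : Type*} [CommRing R] [AddCommGroup Q] [Module R Q] [AddCommGroup M]
    [Module R M] (hQ : Module.Baer R Q) (z : M) (y : Q)
    (h : ∀ c : R, c • z = 0 → c • y = 0) : ∃ f : M →+ Q, f z = y := by
  let P : M →ₗ.[R] Q := LinearPMap.mkSpanSingleton' z y h
  obtain ⟨f, hf⟩ := hQ.extension_property P.domain.subtype P.domain.subtype_injective P.toFun
  have hz : z ∈ P.domain := Submodule.mem_span_singleton_self z
  refine ⟨f.toAddMonoidHom, ?_⟩
  have := LinearMap.congr_fun hf ⟨z, hz⟩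
  have h2 : P ⟨z, hz⟩ = y := LinearPMap.mkSpanSingleton'_apply_self z y h hz
  exact this.trans h2

lemma baer_zmod (n : ℕ) (hn : n ≠ 0) : Module.Baer (ZMod n) (ZMod n) := by
  intro I g
  obtain ⟨d, hd⟩ := (IsPrincipalIdealRing.principal (I.comap (Int.castRingHom (ZMod n)))).principal
  have hd' : ∀ a : ℤ, (a : ZMod n) ∈ I ↔ d ∣ a := by
    intro a
    have : a ∈ I.comap (Int.castRingHom (ZMod n)) ↔ d ∣ a := by
      rw [hd]; exact Ideal.mem_span_singleton
    simpa using this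
  have hnd : d ∣ (n : ℤ) := (hd' n).1 (by simp)
  obtain ⟨d', hdd⟩ := hnd
  have hdI : (d : ZMod n) ∈ I := (hd' d).2 dvd_rfl
  obtain ⟨t, ht⟩ := ZMod.intCast_surjective (g ⟨d, hdI⟩)
  have h0 : ((d' * t : ℤ) : ZMod n) = 0 := by
    have h1 : (d' : ZMod n) • (⟨d, hdI⟩ : I) = 0 := by
      ext
      have : ((d * d' : ℤ) : ZMod n) = 0 := by rw [← hdd]; simp
      push_cast at this
      simpa [mul_comm] using this
    have h2 := congrArg g h1
    rw [map_smul, map_zero, ← ht] at h2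
    push_cast
    simpa using h2
  rw [ZMod.intCast_zmod_eq_zero_iff_dvd, hdd, mul_comm d d'] at h0
  have hd0 : d' ≠ 0 := by
    rintro rfl
    apply hn
    have : (n : ℤ) = 0 := by simpa using hdd
    exact_mod_cast this
  obtain ⟨s, rfl⟩ := (mul_dvd_mul_iff_left hd0).1 h0
  refine ⟨LinearMap.mulRight (ZMod n) (s : ZMod n), ?_⟩
  intro x hx
  obtain ⟨a, rfl⟩ := ZMod.intCast_surjective x
  obtain ⟨b, rfl⟩ := (hd' a).1 hx
  have h1 : (⟨((d * b : ℤ) : ZMod n), hx⟩ : I) = (b : ZMod n) • ⟨d, hdI⟩ := by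
    ext
    simp [mul_comm]
  rw [h1, map_smul, ← ht]
  simp
  ring

/-- Characters of `G` of order dividing `p ^ m` give endomorphisms killing `H'`. -/
lemma exists_char {G : Type*} [AddCommGroup G] (p : ℕ) (hp : p.Prime) (H' : AddSubgroup G)
    (z w : G) (m k : ℕ) (hkm : k ≤ m) (hw : p ^ m • w = 0)
    (h : ∀ c : ℤ, ∀ x ∈ H', PDvd p m (c • z + x) → (p : ℤ) ^ k ∣ c) :
    ∃ θ : G →+ G, θ z = p ^ (m - k) • w ∧ ∀ x ∈ H', θ x = 0 := by
  let K : AddSubgroup G := H' ⊔ (nsmulAddMonoidHom (α := G) (p ^ m)).range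
  have hK : ∀ x : G ⧸ K, p ^ m • x = 0 := by
    intro x
    obtain ⟨x, rfl⟩ := QuotientAddGroup.mk_surjective x
    rw [← QuotientAddGroup.mk_nsmul, QuotientAddGroup.eq_zero_iff]
    exact (le_sup_right : _ ≤ K) ⟨x, rfl⟩
  let inst1 : Module (ZMod (p ^ m)) (G ⧸ K) := AddCommGroup.zmodModule hK
  obtain ⟨f, hf⟩ := baer_ext (baer_zmod (p ^ m) (pow_ne_zero _ hp.ne_zero))
    (QuotientAddGroup.mk z : G ⧸ K) (((p ^ (m - k) : ℕ) : ℤ) : ZMod (p ^ m)) (by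
      intro c hc
      obtain ⟨c, rfl⟩ := ZMod.intCast_surjective c
      rw [Int.cast_smul_eq_zsmul, ← QuotientAddGroup.mk_zsmul, QuotientAddGroup.eq_zero_iff] at hc
      obtain ⟨x, hx, _, ⟨y, rfl⟩, hxy⟩ := AddSubgroup.mem_sup.1 hc
      have := h c (-x) (H'.neg_mem hx) ⟨y, by rw [← hxy]; simp⟩
      rw [smul_eq_mul, ← Int.cast_mul, ZMod.intCast_zmod_eq_zero_iff_dvd]
      have e : ((p ^ m : ℕ) : ℤ) = (p : ℤ) ^ k * ((p ^ (m - k) : ℕ) : ℤ) := by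
        push_cast
        rw [← pow_add]; congr 1; omega
      rw [e]
      exact mul_dvd_mul_right this _)
  let L : ZMod (p ^ m) →+ G := ZMod.lift (p ^ m) ⟨zmultiplesHom G w, by
    simp only [zmultiplesHom_apply]
    rw [natCast_zsmul]; exact hw⟩
  refine ⟨L.comp (f.comp (QuotientAddGroup.mk' K)), ?_, ?_⟩
  · change L (f (QuotientAddGroup.mk z : G ⧸ K)) = _
    rw [hf]
    simp only [L, ZMod.lift_coe]
    simp only [zmultiplesHom_apply, natCast_zsmul]
  · intro x hx
    change L (f (QuotientAddGroup.mk x : G ⧸ K)) = _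
    rw [(QuotientAddGroup.eq_zero_iff x).2 ((le_sup_left : _ ≤ K) hx)]
    simp


/-- In a `p`-torsion setting, divisibility of `c • z` for `c` not divisible by `p ^ k`. -/
lemma pdvd_of_not_dvd {G : Type*} [AddCommGroup G] (p : ℕ) (hp : p.Prime) (z : G) (e : ℕ)
    (hz : p ^ e • z = 0) (m k : ℕ) (c : ℤ) (hc : ¬ (p : ℤ) ^ (k + 1) ∣ c)
    (h : PDvd p m (c • z)) : PDvd p m (p ^ k • z) := by
  have hpZ : Prime (p : ℤ) := Nat.prime_iff_prime_int.1 hp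
  have hc0 : c ≠ 0 := by rintro rfl; exact hc (dvd_zero _)
  have hfin : FiniteMultiplicity (p : ℤ) c := Int.finiteMultiplicity_iff.2
    ⟨by simpa using hp.ne_one, hc0⟩
  obtain ⟨u, hu, hpu⟩ := hfin.exists_eq_pow_mul_and_not_dvd
  generalize multiplicity (p : ℤ) c = l at hu
  have hlk : l ≤ k := by
    by_contra hlt
    apply hc
    rw [hu]
    exact (pow_dvd_pow _ (by omega)).mul_right _
  have hcop : IsCoprime u ((p : ℤ) ^ e) :=
    (((hpZ.irreducible.coprime_iff_not_dvd).2 hpu).symm).pow_right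
  obtain ⟨s, t, hst⟩ := hcop
  have h1 : p ^ k • z = ((p : ℤ) ^ (k - l) * s) • (c • z) := by
    have h2 : (((p : ℤ) ^ k) * (s * u + t * (p : ℤ) ^ e)) • z = p ^ k • z := by
      rw [hst, mul_one, ← natCast_zsmul]; push_cast; rfl
    have h3 : ((p : ℤ) ^ e) • z = 0 := by rw [← hz, ← natCast_zsmul]; push_cast; rfl
    rw [← h2, mul_add, add_smul, ← mul_assoc _ t, mul_smul _ ((p : ℤ) ^ e), h3, smul_zero, add_zero,
      smul_smul, hu]
    congr 1
    have : (p : ℤ) ^ k = (p : ℤ) ^ (k - l) * (p : ℤ) ^ l := by rw [← pow_add]; congr 1; omega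
    rw [this]; ring
  rw [h1]
  exact h.zsmul _

/-- `a` is the image of `z` under an endomorphism killing `H'`. -/
def Att {G : Type*} [AddCommGroup G] (H' : AddSubgroup G) (z a : G) : Prop :=
  ∃ θ : G →+ G, θ z = a ∧ ∀ x ∈ H', θ x = 0

lemma Att.add {G : Type*} [AddCommGroup G] {H' : AddSubgroup G} {z a b : G}
    (ha : Att H' z a) (hb : Att H' z b) : Att H' z (a + b) := by
  obtain ⟨θ, h1, h2⟩ := ha
  obtain ⟨η, h3, h4⟩ := hb
  exact ⟨θ + η, by simp [h1, h3], fun x hx => by simp [h2 x hx, h4 x hx]⟩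

lemma att_induction {G : Type*} [AddCommGroup G] (p : ℕ) (hp : p.Prime) (z : G) (e : ℕ)
    (hz : p ^ e • z = 0) (H' : AddSubgroup G)
    (hval : ∀ (m : ℕ) (c : ℤ), ∀ x ∈ H', PDvd p m (c • z + x) → PDvd p m (c • z)) :
    ∀ (j : ℕ) (_ : ∀ i < j, ∃ m, ¬ PDvd p m (p ^ i • z)) (z' : G) (_ : p ^ j • z' = 0)
      (_ : ∀ i m, PDvd p m (p ^ i • z) → PDvd p m (p ^ i • z')), Att H' z z' := by
  intro j
  induction j with
  | zero =>
    intro _ z' hz' _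
    rw [pow_zero, one_smul] at hz'
    exact ⟨0, by simp [hz'], by simp⟩
  | succ j ih =>
    intro hfin z' hz' hh
    classical
    have hex := hfin j (by omega)
    obtain ⟨r, hr1, hr2⟩ : ∃ r, PDvd p r (p ^ j • z) ∧ ¬ PDvd p (r + 1) (p ^ j • z) := by
      have hf := Nat.find_spec hex
      have hpos : Nat.find hex ≠ 0 := by
        intro h0
        rw [h0] at hf
        exact hf ⟨p ^ j • z, by simp⟩
      obtain ⟨r, hr⟩ := Nat.exists_eq_succ_of_ne_zero hpos
      refine ⟨r, ?_, by rw [hr] at hf; exact hf⟩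
      by_contra hc
      exact Nat.find_min hex (by omega) hc
    have hjr : j ≤ r := by
      by_contra hlt
      exact hr2 (PDvd.mono (m := j) ⟨z, rfl⟩ (by omega))
    obtain ⟨w, hw⟩ := hh j r hr1
    have hw0 : p ^ (r + 1) • w = 0 := by
      rw [pow_succ', mul_smul, hw, smul_smul, ← pow_succ', hz']
    have hatt : Att H' z (p ^ (r + 1 - (j + 1)) • w) := by
      refine exists_char p hp H' z w (r + 1) (j + 1) (by omega) hw0 ?_
      intro c x hx hd
      by_contra hc
      exact hr2 (pdvd_of_not_dvd p hp z e hz (r + 1) j c hc (hval _ c x hx hd))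
    have hrj : r + 1 - (j + 1) = r - j := by omega
    rw [hrj] at hatt
    have hpj : p ^ j • (z' - p ^ (r - j) • w) = 0 := by
      rw [smul_sub, smul_smul, ← pow_add, show j + (r - j) = r by omega, hw, sub_self]
    have := ih (fun i hi => hfin i (by omega)) (z' - p ^ (r - j) • w) hpj (by
      intro i m him
      by_cases hij : i < j
      · rw [smul_sub]
        refine (hh i m him).sub ?_
        have hm : m ≤ r - j + i := by
          by_contra hlt
          apply hr2
          obtain ⟨y, hy⟩ := him
          refine PDvd.mono (m := m + (j - i)) ⟨y, ?_⟩ (by omega)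
          rw [add_comm, pow_add, mul_smul, hy, smul_smul, ← pow_add]
          congr 2; omega
        refine PDvd.mono (m := r - j + i) ⟨w, ?_⟩ hm
        rw [smul_smul, ← pow_add, add_comm]
      · have : p ^ i • (z' - p ^ (r - j) • w) = 0 := by
          rw [show i = (i - j) + j by omega, pow_add, mul_smul, hpj, smul_zero]
        rw [this]
        exact PDvd.zero)
    have h2 := this.add hatt
    rwa [sub_add_cancel] at h2

lemma core {G : Type*} [AddCommGroup G] (p : ℕ) (hp : p.Prime) (hG : IsPGrp p G) (z : G) (e : ℕ)
    (hz : addOrderOf z = p ^ e) (hQ : InQ (zmultiples z)) (H' : AddSubgroup G)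
    (hdisj : ∀ c : ℤ, c • z ∈ H' → c • z = 0)
    (hval : ∀ (m : ℕ) (c : ℤ), ∀ x ∈ H', PDvd p m (c • z + x) → PDvd p m (c • z)) :
    Att H' z z := by
  classical
  have hz0 : p ^ e • z = 0 := by rw [← hz]; exact addOrderOf_nsmul_eq_zero z
  by_cases hall : ∀ i < e, ∃ m, ¬ PDvd p m (p ^ i • z)
  · exact att_induction p hp z e hz0 H' hval e hall z hz0 (fun _ _ h => h)
  have hex : ∃ j, ∀ m, PDvd p m (p ^ j • z) := by
    push Not at hall
    obtain ⟨i, _, hi⟩ := hall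
    exact ⟨i, hi⟩
  push Not at hall
  obtain ⟨i0, hi0, hinf0⟩ := hall
  obtain ⟨e, rfl⟩ : ∃ e', e = e' + 1 := ⟨e - 1, by omega⟩
  have hinf : ∀ m, PDvd p m (p ^ e • z) := by
    intro m
    have := (hinf0 m).nsmul (p ^ (e - i0))
    rwa [smul_smul, ← pow_add, show e - i0 + i0 = e by omega] at this
  -- every element of `G[p^(e+1)]` is an image of `z`
  have himg : ∀ y : G, p ^ (e + 1) • y = 0 → ∃ g : G →+ G, g z = y := by
    intro y hy
    obtain ⟨f, hf⟩ : ∃ f : zmultiples z →+ G, f ⟨z, mem_zmultiples z⟩ = y := by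
      let F : ℤ →+ zmultiples z := zmultiplesHom _ ⟨z, mem_zmultiples z⟩
      have hF : Function.Surjective F := by
        rintro ⟨_, c, rfl⟩
        exact ⟨c, by ext; simp [F]⟩
      let f := F.liftOfSurjective hF ⟨zmultiplesHom G y, by
        intro c hc
        rw [AddMonoidHom.mem_ker] at hc ⊢
        have h1 : c • z = 0 := by simpa [F] using congrArg Subtype.val hc
        rw [← addOrderOf_dvd_iff_zsmul_eq_zero, hz] at h1
        obtain ⟨d, rfl⟩ := h1
        rw [zmultiplesHom_apply, mul_comm, mul_smul, natCast_zsmul, hy, smul_zero]⟩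
      refine ⟨f, ?_⟩
      have h1 : F 1 = ⟨z, mem_zmultiples z⟩ := by simp [F]
      rw [← h1]
      simp only [f]
      rw [AddMonoidHom.liftOfSurjective, AddMonoidHom.liftOfRightInverse_comp_apply]
      simp
    obtain ⟨g, hg⟩ := hQ f
    exact ⟨g, by rw [← hf, ← hg]⟩
  have hsoc : ∀ y : G, p ^ (e + 1) • y = 0 → ∀ m, PDvd p m (p ^ e • y) := by
    intro y hy m
    obtain ⟨g, rfl⟩ := himg y hy
    rw [← map_nsmul]
    exact (hinf m).map g
  -- `p^e G` is divisible
  have hdiv1 : ∀ n : ℕ, ∀ u : G, p ^ n • p ^ e • u = 0 → ∃ v : G, p • p ^ e • v = p ^ e • u := by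
    intro n
    induction n with
    | zero =>
      intro u hu
      exact ⟨0, by simpa using hu.symm⟩
    | succ n ih =>
      intro u hu
      obtain ⟨t, ht⟩ := hsoc (p ^ n • u) (by
        rw [← hu, smul_smul, smul_smul]; congr 1; ring) (n + 1 + e)
      obtain ⟨v, hv⟩ := ih (u - p • t) (by
        rw [smul_sub, smul_sub, sub_eq_zero, smul_comm (p ^ n), ← ht, smul_smul, smul_smul]
        congr 1; ring)
      refine ⟨v + t, ?_⟩
      rw [smul_add, smul_add, hv, smul_sub, smul_comm (p ^ e) p t, sub_add_cancel]
  have hdiv2 : ∀ a : ℕ, ∀ u : G, ∃ v : G, p ^ a • p ^ e • v = p ^ e • u := by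
    intro a
    induction a with
    | zero => intro u; exact ⟨u, by simp⟩
    | succ a ih =>
      intro u
      obtain ⟨n, hn⟩ := hG (p ^ e • u)
      obtain ⟨v, hv⟩ := hdiv1 n u hn
      obtain ⟨t, ht⟩ := ih v
      exact ⟨t, by rw [pow_succ', mul_smul, ht, hv]⟩
  let D : AddSubgroup G := (nsmulAddMonoidHom (α := G) (p ^ e)).range
  have hsurj : ∀ {c : ℤ}, c ≠ 0 → Function.Surjective (fun a : D => c • a) := by
    rintro c hc ⟨_, u, rfl⟩
    have hpZ : Prime (p : ℤ) := Nat.prime_iff_prime_int.1 hp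
    have hfin : FiniteMultiplicity (p : ℤ) c := Int.finiteMultiplicity_iff.2
      ⟨by simpa using hp.ne_one, hc⟩
    obtain ⟨q, hq, hpq⟩ := hfin.exists_eq_pow_mul_and_not_dvd
    generalize multiplicity (p : ℤ) c = l at hq
    obtain ⟨v, hv⟩ := hdiv2 l u
    obtain ⟨n, hn⟩ := hG (p ^ e • u)
    have hcop : IsCoprime q ((p : ℤ) ^ n) :=
      (((hpZ.irreducible.coprime_iff_not_dvd).2 hpq).symm).pow_right
    obtain ⟨s, t, hst⟩ := hcop
    refine ⟨⟨p ^ e • (s • v), ⟨s • v, rfl⟩⟩, ?_⟩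
    ext
    change c • p ^ e • s • v = p ^ e • u
    have hn' : (p : ℤ) ^ n • p ^ e • u = 0 := by
      rw [← hn, ← natCast_zsmul _ (p ^ n)]; push_cast; rfl
    have hv' : (p : ℤ) ^ l • p ^ e • v = p ^ e • u := by
      rw [← hv, ← natCast_zsmul _ (p ^ l)]; push_cast; rfl
    have h1 : p ^ e • u = (s * q + t * (p : ℤ) ^ n) • p ^ e • u := by rw [hst, one_smul]
    rw [h1, add_smul, mul_smul t, hn', smul_zero, add_zero, ← hv', smul_smul, smul_comm (p ^ e) s v,
      smul_smul, hq]
    congr 1; ring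
  let instD : DivisibleBy D ℤ := divisibleByOfSMulRightSurj D ℤ hsurj
  have hbaer : Module.Baer ℤ D := Module.Baer.of_divisible D
  -- the divisible part
  have hj := Nat.find_spec hex
  have hjmin : ∀ i < Nat.find hex, ∃ m, ¬ PDvd p m (p ^ i • z) := by
    intro i hi
    have := Nat.find_min hex hi
    push Not at this
    exact this
  have hje : Nat.find hex ≤ e := Nat.find_min' hex hinf
  generalize Nat.find hex = j at hj hjmin hje
  obtain ⟨t, ht⟩ := hj (j + e)
  have hd0 : p ^ (e + 1) • p ^ e • t = 0 := by
    have h1 : p ^ (e + 1) • p ^ e • t = p ^ (e + 1 - j) • p ^ (j + e) • t := by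
      rw [smul_smul, smul_smul, ← pow_add, ← pow_add]; congr 2; omega
    rw [h1, ht, smul_smul, ← pow_add, show e + 1 - j + j = e + 1 by omega, hz0]
  have hdA : Att H' z (p ^ e • t) := by
    obtain ⟨f, hf⟩ := baer_ext hbaer (QuotientAddGroup.mk z : G ⧸ H') ⟨p ^ e • t, ⟨t, rfl⟩⟩ (by
      intro c hc
      rw [← QuotientAddGroup.mk_zsmul, QuotientAddGroup.eq_zero_iff] at hc
      have h1 := hdisj c hc
      rw [← addOrderOf_dvd_iff_zsmul_eq_zero, hz] at h1
      obtain ⟨d, rfl⟩ := h1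
      ext
      change (((p ^ (e + 1) : ℕ) : ℤ) * d) • p ^ e • t = 0
      rw [mul_comm, mul_smul, natCast_zsmul, hd0, smul_zero])
    refine ⟨D.subtype.comp (f.comp (QuotientAddGroup.mk' H')), ?_, ?_⟩
    · change ((f (QuotientAddGroup.mk z : G ⧸ H') : D) : G) = _
      rw [hf]
    · intro x hx
      change ((f (QuotientAddGroup.mk x : G ⧸ H') : D) : G) = _
      rw [(QuotientAddGroup.eq_zero_iff x).2 hx]
      simp
  have hrest : Att H' z (z - p ^ e • t) := by
    refine att_induction p hp z (e + 1) hz0 H' hval j hjmin _ ?_ ?_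
    · rw [smul_sub, smul_smul, ← pow_add, ht, sub_self]
    · intro i m him
      rw [smul_sub]
      refine him.sub (PDvd.nsmul ?_ _)
      obtain ⟨v, hv⟩ := hdiv2 m t
      exact ⟨_, hv⟩
  have := hrest.add hdA
  rwa [sub_add_cancel] at this

lemma exists_hom {G : Type*} [AddCommGroup G] (n : ℕ) (z : Fin n → G)
    (hind : iSupIndep (fun i => zmultiples (z i))) (v : Fin n → ℤ) (h : ∑ i, v i • z i = 0) :
    ∀ i, v i • z i = 0 := by
  intro i
  have h1 : v i • z i ∈ zmultiples (z i) := zsmul_mem_zmultiples _ _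
  have h2 : v i • z i ∈ ⨆ j, ⨆ (_ : j ≠ i), zmultiples (z j) := by
    rw [← Finset.add_sum_erase _ _ (Finset.mem_univ i)] at h
    rw [eq_neg_of_add_eq_zero_left h]
    refine neg_mem (sum_mem fun j hj => ?_)
    have hji : j ≠ i := Finset.ne_of_mem_erase hj
    exact (le_iSup₂_of_le (f := fun j (_ : j ≠ i) => zmultiples (z j)) j hji le_rfl)
      (zsmul_mem_zmultiples _ _)
  exact (AddSubgroup.disjoint_def.1 (hind i)) h1 h2

/-- The subgroup spanned by the other generators. -/
def others {G : Type*} [AddCommGroup G] {n : ℕ} (z : Fin n → G) (i : Fin n) : AddSubgroup G where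
  carrier := {x | ∃ v : Fin n → ℤ, v i = 0 ∧ ∑ j, v j • z j = x}
  zero_mem' := ⟨0, rfl, by simp⟩
  add_mem' := by
    rintro _ _ ⟨v, hv, rfl⟩ ⟨w, hw, rfl⟩
    exact ⟨v + w, by simp [hv, hw], by simp [add_smul, Finset.sum_add_distrib]⟩
  neg_mem' := by
    rintro _ ⟨v, hv, rfl⟩
    exact ⟨-v, by simp [hv], by simp⟩

lemma mem_span {G : Type*} [AddCommGroup G] {n : ℕ} (z : Fin n → G) (x : G) 
    (hx : x ∈ ⨆ i, zmultiples (z i)) : ∃ v : Fin n → ℤ, ∑ j, v j • z j = x := by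
  let S : AddSubgroup G := 
    (∑ j : Fin n, (zmultiplesHom G (z j)).comp (Pi.evalAddMonoidHom (fun _ : Fin n => ℤ) j)).range
  have hS : (⨆ i, zmultiples (z i)) ≤ S := by
    refine iSup_le fun i => ?_
    rw [zmultiples_le]
    refine ⟨Pi.single i 1, ?_⟩
    simp [Pi.single_apply]
  obtain ⟨v, hv⟩ := hS hx
  exact ⟨v, by simpa using hv⟩

lemma hom_of_images {G : Type*} [AddCommGroup G] (n : ℕ) (z : Fin n → G)
    (hind : iSupIndep (fun i => zmultiples (z i)))
    (H : AddSubgroup G) (hH : H = ⨆ i, zmultiples (z i)) (hQ : InQ H) (y : Fin n → G)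
    (hy : ∀ i, ∀ c : ℤ, c • z i = 0 → c • y i = 0) :
    ∃ g : G →+ G, ∀ i, g (z i) = y i := by
  have hzH : ∀ i, z i ∈ H := fun i => by
    rw [hH]; exact (le_iSup (fun i => zmultiples (z i)) i) (mem_zmultiples _)
  let F : (Fin n → ℤ) →+ H := 
    ∑ j : Fin n, (zmultiplesHom H ⟨z j, hzH j⟩).comp (Pi.evalAddMonoidHom (fun _ : Fin n => ℤ) j)
  let Y : (Fin n → ℤ) →+ G := 
    ∑ j : Fin n, (zmultiplesHom G (y j)).comp (Pi.evalAddMonoidHom (fun _ : Fin n => ℤ) j)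
  have hFv : ∀ v, (F v : G) = ∑ j, v j • z j := by
    intro v; simp [F]
  have hYv : ∀ v, Y v = ∑ j, v j • y j := by
    intro v; simp [Y]
  have hF : Function.Surjective F := by
    rintro ⟨x, hx⟩
    obtain ⟨v, hv⟩ := mem_span z x (hH ▸ hx)
    exact ⟨v, by ext; rw [hFv, hv]⟩
  let f := F.liftOfSurjective hF ⟨Y, by
    intro v hv
    rw [AddMonoidHom.mem_ker] at hv ⊢
    have h1 := exists_hom n z hind v (by rw [← hFv, hv]; rfl)
    rw [hYv]
    exact Finset.sum_eq_zero fun i _ => hy i _ (h1 i)⟩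
  have hf : ∀ v, f (F v) = Y v := by
    intro v
    simp only [f]
    rw [AddMonoidHom.liftOfSurjective, AddMonoidHom.liftOfRightInverse_comp_apply]
  obtain ⟨g, hg⟩ := hQ f
  refine ⟨g, fun i => ?_⟩
  have h1 : (F (Pi.single i 1) : G) = z i := by
    rw [hFv]; simp [Pi.single_apply]
  have h2 := hg (F (Pi.single i 1))
  rw [h1, hf, hYv] at h2
  rw [h2]
  simp [Pi.single_apply]

end Helpers

theorem stmt12 {G : Type*} [AddCommGroup G] (p : ℕ) (hp : p.Prime) (hG : IsPGrp p G)
    (n : ℕ) (z : Fin n → G) (e : Fin n → ℕ) (hord : ∀ i, addOrderOf (z i) = p ^ e i)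
    (hind : iSupIndep (fun i => zmultiples (z i)))
    (H : AddSubgroup G) (hH : H = ⨆ i, zmultiples (z i)) :
    InQ H ↔
      ((∀ i, InQ (zmultiples (z i))) ∧
        ∀ c : Fin n → G, (∀ i, c i ∈ zmultiples (z i)) →
          pHeight p (∑ i, c i) = ⨅ i, pHeight p (c i)) := by
  classical
  constructor
  · intro hQ
    constructor
    · intro i f
      obtain ⟨g, hg⟩ := hom_of_images n z hind H hH hQ
        (fun j => if j = i then f ⟨z i, mem_zmultiples _⟩ else 0) (by
          intro j c hc
          by_cases hji : j = i
          · subst hji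
            simp only [if_true]
            rw [← map_zsmul]
            have : c • (⟨z j, mem_zmultiples _⟩ : zmultiples (z j)) = 0 := by ext; exact hc
            rw [this, map_zero]
          · simp [hji])
      refine ⟨g, ?_⟩
      rintro ⟨_, c, rfl⟩
      have h1 := hg i
      simp only [if_true] at h1
      have h2 : (⟨c • z i, ⟨c, rfl⟩⟩ : zmultiples (z i)) = c • ⟨z i, mem_zmultiples _⟩ := by
        ext; rfl
      change g (c • z i) = f ⟨c • z i, ⟨c, rfl⟩⟩
      rw [h2, map_zsmul, map_zsmul, h1]
    · intro c hc
      rw [pHeight_sum_eq_iff]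
      intro m hm i
      obtain ⟨g, hg⟩ := hom_of_images n z hind H hH hQ
        (fun j => if j = i then z i else 0) (by
          intro j c hc
          by_cases hji : j = i
          · subst hji
            simpa using hc
          · simp [hji])
      have h1 : g (∑ j, c j) = c i := by
        rw [map_sum, Finset.sum_eq_single i]
        · obtain ⟨k, hk⟩ := hc i
          rw [← hk]
          simp [hg]
        · intro j _ hji
          obtain ⟨k, hk⟩ := hc j
          rw [← hk]
          simp [hg, hji]
        · simp
      rw [← h1]
      exact hm.map g
  · rintro ⟨hQ, hval⟩ f
    have hzH : ∀ i, z i ∈ H := fun i => by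
      rw [hH]; exact (le_iSup (fun i => zmultiples (z i)) i) (mem_zmultiples _)
    have hproj : ∀ i, Att (others z i) (z i) (z i) := by
      intro i
      refine core p hp hG (z i) (e i) (hord i) (hQ i) (others z i) ?_ ?_
      · rintro c ⟨v, hvi, hv⟩
        have h1 := exists_hom n z hind (v - Pi.single i c) (by
          simp [sub_smul, Finset.sum_sub_distrib, hv, Pi.single_apply]) i
        simpa [hvi] using h1
      · rintro m c _ ⟨v, hvi, rfl⟩ hd
        have h1 := (pHeight_sum_eq_iff p _).1 (hval (fun j => (v + Pi.single i c : Fin n → ℤ) j • z j)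
          (fun j => zsmul_mem_zmultiples _ _)) m (by
            have : ∑ j, (v + Pi.single i c : Fin n → ℤ) j • z j = c • z i + ∑ j, v j • z j := by
              simp [add_smul, Finset.sum_add_distrib, Pi.single_apply, add_comm]
            rw [this]; exact hd) i
        simpa [hvi] using h1
    choose θ hθ1 hθ2 using hproj
    have hext : ∀ i, ∃ g : G →+ G, g (z i) = f ⟨z i, hzH i⟩ := by
      intro i
      have hle : zmultiples (z i) ≤ H := by rw [zmultiples_le]; exact hzH i
      obtain ⟨g, hg⟩ := hQ i (f.comp (AddSubgroup.inclusion hle))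
      exact ⟨g, hg ⟨z i, mem_zmultiples _⟩⟩
    choose g hg using hext
    refine ⟨∑ i, (g i).comp (θ i), ?_⟩
    have hgen : ∀ j, (∑ i, (g i).comp (θ i)) (z j) = f ⟨z j, hzH j⟩ := by
      intro j
      rw [AddMonoidHom.finsetSum_apply, Finset.sum_eq_single j]
      · simp [hθ1, hg]
      · intro i _ hij
        have : z j ∈ others z i :=
          ⟨Pi.single j 1, by simp [hij], by simp [Pi.single_apply]⟩
        simp [hθ2 i _ this]
      · simp
    rintro ⟨x, hx⟩
    obtain ⟨v, hv⟩ := mem_span z x (hH ▸ hx)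
    have hx' : (⟨x, hx⟩ : H) = ∑ j, v j • ⟨z j, hzH j⟩ := by
      ext; simp [hv]
    rw [hx', map_sum]
    simp only [map_zsmul, ← hgen]
    simp [Finset.smul_sum]
end

section
/- Let G be an abelian group and H a finitely generated subgroup of G. If every monomorphism H → G extends to an endomorphism of G, then every homomorphism H → G extends to an endomorphism of G. -/
open AddSubgroup

/-- `x` has finite order. -/
def TorEl {A : Type*} [AddCommGroup A] (x : A) : Prop := ∃ n : ℤ, n ≠ 0 ∧ n • x = 0

/-- The extendable homomorphisms. -/
def extSub {G : Type*} [AddCommGroup G] (H : AddSubgroup G) : AddSubgroup (H →+ G) where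
  carrier := {f | ∃ g : G →+ G, ∀ x : H, g x = f x}
  zero_mem' := ⟨0, fun x => by simp⟩
  add_mem' := by
    rintro f f' ⟨g, hg⟩ ⟨g', hg'⟩
    exact ⟨g + g', fun x => by simp [hg, hg']⟩
  neg_mem' := by
    rintro f ⟨g, hg⟩
    exact ⟨-g, fun x => by simp [hg]⟩

open TensorProduct in
theorem finite_eig {G : Type*} [AddCommGroup G] (H : AddSubgroup G) (hfg : H.FG)
    (f : H →+ G) : {m : ℤ | ∃ x : H, ¬ TorEl x ∧ f x = m • (x : G)}.Finite := by
  have : Module.Finite ℤ H := by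
    have := (AddGroup.fg_iff_addSubgroup_fg H).2 hfg
    exact Module.Finite.iff_addGroup_fg.2 this
  let i0 : H →ₗ[ℤ] G := H.subtype.toIntLinearMap
  let f0 : H →ₗ[ℤ] G := f.toIntLinearMap
  let iQ := LinearMap.baseChange ℚ i0
  let fQ := LinearMap.baseChange ℚ f0
  have hi : Function.Injective iQ :=
    Module.Flat.lTensor_preserves_injective_linearMap (M := ℚ) i0 (Subtype.val_injective)
  obtain ⟨r, hr⟩ := LinearMap.exists_leftInverse_of_injective iQ (LinearMap.ker_eq_bot.2 hi)
  have hfin := Module.End.finite_hasEigenvalue (r ∘ₗ fQ)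
  refine Set.Finite.subset (hfin.preimage (f := fun m : ℤ => (m : ℚ))
    (Int.cast_injective.injOn)) ?_
  rintro m ⟨x, hx, hfx⟩
  refine Module.End.hasEigenvalue_of_hasEigenvector (x := (1 : ℚ) ⊗ₜ[ℤ] x) ⟨?_, ?_⟩
  · rw [Module.End.mem_eigenspace_iff]
    have h1 : fQ ((1 : ℚ) ⊗ₜ[ℤ] x) = (m : ℚ) • iQ ((1 : ℚ) ⊗ₜ[ℤ] x) := by
      simp only [fQ, iQ, LinearMap.baseChange_tmul]
      have : f0 x = m • i0 x := hfx
      rw [this, TensorProduct.tmul_smul, Int.cast_smul_eq_zsmul]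
    rw [LinearMap.comp_apply, h1, map_smul]
    congr 1
    exact LinearMap.congr_fun hr _
  · intro h0
    apply hx
    obtain ⟨s, hs⟩ := (IsLocalizedModule.eq_zero_iff (nonZeroDivisors ℤ)
      (TensorProduct.mk ℤ ℚ H 1)).1 h0
    exact ⟨s, nonZeroDivisors.coe_ne_zero s, hs⟩

theorem ext_of_inj_tor {G : Type*} [AddCommGroup G] (H : AddSubgroup G) (hfg : H.FG)
    (hP : InP H) (N : ℤ) (hN : N ≠ 0) (hNx : ∀ x : H, TorEl x → N • x = 0)
    (f : H →+ G) (hf : ∀ x : H, TorEl x → f x = 0 → x = 0) : f ∈ extSub H := by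
  have hfin := finite_eig H hfg f
  obtain ⟨m, hm⟩ : ∃ m : ℤ, ¬ (m * N) ∈ {m : ℤ | ∃ x : H, ¬ TorEl x ∧ f x = m • (x : G)} := by
    by_contra! hcon
    have := hfin.preimage (f := fun m : ℤ => m * N) ((mul_left_injective₀ hN).injOn)
    have h2 : ((fun m : ℤ => m * N) ⁻¹' {m : ℤ | ∃ x : H, ¬ TorEl x ∧ f x = m • (x : G)})
      = Set.univ := Set.eq_univ_of_forall hcon
    rw [h2] at this
    exact Set.infinite_univ this
  have key : f - (m * N) • H.subtype ∈ extSub H := by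
    apply hP
    rw [injective_iff_map_eq_zero]
    intro x hx
    have hx' : f x = (m * N) • (x : G) := by
      simpa [sub_eq_zero] using hx
    have ht : TorEl x := by
      by_contra h
      exact hm ⟨x, h, hx'⟩
    apply hf x ht
    rw [hx', mul_smul, ← AddSubgroup.coe_zsmul, hNx x ht]
    simp
  have hi : H.subtype ∈ extSub H := ⟨AddMonoidHom.id G, fun x => rfl⟩
  have := add_mem key ((extSub H).zsmul_mem hi (m * N))
  simpa using this

theorem exists_proj {G : Type*} [AddCommGroup G] (p : ℕ) (hp : p.Prime) (s : G)
    (hs : p • s = 0) (h : ℕ) (c : G) (hc : p ^ h • c = s)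
    (hno : ¬ ∃ d : G, p ^ (h + 1) • d = s) :
    ∃ π : G →+ G, π s = s ∧ ∀ x, ∃ k : ℤ, π x = k • c := by
  set N := p ^ (h + 1) with hN
  have hNpos : 0 < N := pow_pos hp.pos _
  have hcN : (N : ℤ) • c = 0 := by
    rw [natCast_zsmul, hN, pow_succ', mul_smul, hc, hs]
  let R : AddSubgroup G := (nsmulAddMonoidHom (α := G) N).range
  have hsR : (QuotientAddGroup.mk' R s) ≠ 0 := by
    intro h0
    have := (QuotientAddGroup.eq_zero_iff s).1 h0
    obtain ⟨d, hd⟩ := this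
    exact hno ⟨d, hd⟩
  obtain ⟨χ0, hχ0⟩ := CharacterModule.exists_character_apply_ne_zero_of_ne_zero hsR
  let χ : G →+ AddCircle (1 : ℚ) := AddMonoidHom.comp χ0 (QuotientAddGroup.mk' R)
  have hχs : χ s ≠ 0 := hχ0
  have hχN : ∀ x, N • χ x = 0 := by
    intro x
    rw [← map_nsmul]
    have : QuotientAddGroup.mk' R (N • x) = 0 := (QuotientAddGroup.eq_zero_iff _).2 ⟨x, rfl⟩
    change χ0 (QuotientAddGroup.mk' R (N • x)) = 0
    rw [this, map_zero]
  let w : AddCircle (1 : ℚ) := ((1 / N : ℚ) : AddCircle (1 : ℚ))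
  have hw : addOrderOf w = N := AddCircle.addOrderOf_period_div hNpos
  have hk : ∀ x, ∃ k : ℤ, χ x = k • w := by
    intro x
    obtain ⟨m, -, hm⟩ := (AddCircle.nsmul_eq_zero_iff hNpos).1 (hχN x)
    refine ⟨m, ?_⟩
    rw [← hm, natCast_zsmul, ← AddCircle.coe_nsmul]
    congr 1
    simp [div_eq_mul_inv]
  choose k hk using hk
  have hdvd : ∀ z : ℤ, z • w = 0 → z • c = 0 := by
    intro z hz
    rw [← addOrderOf_dvd_iff_zsmul_eq_zero, hw] at hz
    obtain ⟨t, rfl⟩ := hz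
    rw [mul_comm, mul_smul, hcN, smul_zero]
  let π0 : G →+ G := AddMonoidHom.mk' (fun x => k x • c) (by
    intro x y
    have := hdvd (k (x + y) - (k x + k y)) (by
      rw [sub_smul, add_smul, ← hk, ← hk, ← hk, map_add, sub_self])
    rw [sub_smul, add_smul, sub_eq_zero] at this
    exact this)
  -- `k c` is prime to `p`
  have hkc : IsCoprime (k c) (p : ℤ) := by
    rw [isCoprime_comm, Prime.coprime_iff_not_dvd (Nat.prime_iff_prime_int.1 hp)]
    rintro ⟨t, ht⟩
    apply hχs
    rw [← hc, map_nsmul, hk c, ht, mul_smul, natCast_zsmul, ← mul_smul, ← pow_succ, ← hN,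
      smul_comm, ← hw, addOrderOf_nsmul_eq_zero, smul_zero]
  obtain ⟨u, v, huv⟩ := hkc
  refine ⟨u • π0, ?_, fun x => ⟨u * k x, ?_⟩⟩
  · have h1 : π0 s = k c • s := by
      rw [← hc, map_nsmul, smul_comm (k c)]
      rfl
    have h2 : (u * k c) • s = (1 - v * p) • s := by rw [← huv]; simp
    rw [AddMonoidHom.smul_apply, h1, ← mul_smul, h2, sub_smul, mul_smul, natCast_zsmul, hs]
    simp
  · rw [mul_smul]; rfl

theorem TorEl.add {A : Type*} [AddCommGroup A] {x y : A} (hx : TorEl x) (hy : TorEl y) :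
    TorEl (x + y) := by
  obtain ⟨m, hm, hmx⟩ := hx
  obtain ⟨n, hn, hny⟩ := hy
  refine ⟨m * n, mul_ne_zero hm hn, ?_⟩
  rw [smul_add, mul_smul m n y, hny, mul_comm, mul_smul, hmx]
  simp

theorem TorEl.zsmul {A : Type*} [AddCommGroup A] {x : A} (hx : TorEl x) (k : ℤ) :
    TorEl (k • x) := by
  obtain ⟨m, hm, hmx⟩ := hx
  exact ⟨m, hm, by rw [smul_comm, hmx, smul_zero]⟩

theorem TorEl.sum {A ι : Type*} [AddCommGroup A] (s : Finset ι) (x : ι → A)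
    (hx : ∀ i ∈ s, TorEl (x i)) : TorEl (∑ i ∈ s, x i) :=
  Finset.sum_induction x TorEl (fun _ _ => TorEl.add) ⟨1, one_ne_zero, smul_zero _⟩ hx

/-- Decomposition of the torsion part into cyclic groups of prime power order. -/
structure CycDat (A : Type*) [AddCommGroup A] where
  ι : Type
  fin : Fintype ι
  dec : DecidableEq ι
  p : ι → ℕ
  e : ι → ℕ
  hp : ∀ i, (p i).Prime
  c : ∀ i, A →+ ZMod (p i ^ e i)
  a : ι → A
  c_self : ∀ i, c i (a i) = 1
  c_ne : ∀ i j, i ≠ j → c i (a j) = 0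
  a_tor : ∀ i, p i ^ e i • a i = 0
  inj : ∀ x, TorEl x → (∀ i, c i x = 0) → x = 0

theorem exists_cycDat (A : Type*) [AddCommGroup A] [AddGroup.FG A] : Nonempty (CycDat A) := by
  classical
  obtain ⟨n, ι, hfin, p, hp, e, ⟨φ⟩⟩ := AddCommGroup.equiv_free_prod_directSum_zmod A
  refine ⟨⟨ι, hfin, inferInstance, p, e, hp,
    fun i => (DirectSum.component ℤ ι (fun i => ZMod (p i ^ e i)) i).toAddMonoidHom.comp
      ((AddMonoidHom.snd _ _).comp φ.toAddMonoidHom),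
    fun i => φ.symm (0, DirectSum.of (fun i => ZMod (p i ^ e i)) i 1), ?_, ?_, ?_, ?_⟩⟩
  · intro i
    simp [DirectSum.component]
    exact DirectSum.of_eq_same i 1
  · intro i j hij
    simp [DirectSum.component]
    exact DirectSum.of_eq_of_ne _ _ _ hij
  · intro i
    rw [← map_nsmul]
    have : p i ^ e i • ((0, DirectSum.of (fun i => ZMod (p i ^ e i)) i 1) :
        (Fin n →₀ ℤ) × DirectSum ι fun i => ZMod (p i ^ e i)) = 0 := by
      ext1
      · simp
      · simp only [Prod.smul_snd, Prod.snd_zero]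
        rw [← map_nsmul]
        simp
    rw [this, map_zero]
  · rintro x ⟨m, hm, hmx⟩ hx
    apply φ.injective
    rw [map_zero]
    ext1
    · have h1 : m • (φ x).1 = 0 := by
        rw [← Prod.smul_fst, ← map_zsmul, hmx, map_zero]; rfl
      ext t
      have h2 := DFunLike.congr_fun h1 t
      simpa [hm] using h2
    · refine DFinsupp.ext fun i => ?_
      exact hx i

/-- The homomorphism `x ↦ c(x) • y`. -/
noncomputable def cF {A G : Type*} [AddCommGroup A] [AddCommGroup G] {N : ℕ} (c : A →+ ZMod N)
    (y : G) : A →+ G := by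
  classical
  exact if h : N • y = 0 then (ZMod.lift N ⟨zmultiplesHom G y, by simpa using h⟩).comp c else 0

theorem cF_apply {A G : Type*} [AddCommGroup A] [AddCommGroup G] {N : ℕ} (c : A →+ ZMod N)
    (y : G) (h : N • y = 0) (x : A) (k : ℤ) (hk : c x = k) : cF c y x = k • y := by
  rw [cF, dif_pos h, AddMonoidHom.comp_apply, hk, ZMod.lift_coe]
  simp

theorem cF_add {A G : Type*} [AddCommGroup A] [AddCommGroup G] {N : ℕ} (c : A →+ ZMod N)
    (y y' : G) (h : N • y = 0) (h' : N • y' = 0) : cF c (y + y') = cF c y + cF c y' := by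
  ext x
  obtain ⟨k, hk⟩ := ZMod.intCast_surjective (c x)
  rw [AddMonoidHom.add_apply, cF_apply c _ h x k hk.symm, cF_apply c _ h' x k hk.symm,
    cF_apply c _ (by rw [smul_add, h, h', add_zero]) x k hk.symm, smul_add]

theorem cF_zsmul {A G : Type*} [AddCommGroup A] [AddCommGroup G] {N : ℕ} (c : A →+ ZMod N)
    (y : G) (h : N • y = 0) (t : ℤ) : cF c (t • y) = t • cF c y := by
  ext x
  obtain ⟨k, hk⟩ := ZMod.intCast_surjective (c x)
  rw [AddMonoidHom.smul_apply, cF_apply c _ h x k hk.symm,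
    cF_apply c _ (by rw [smul_comm, h, smul_zero]) x k hk.symm, smul_comm]

theorem CycDat.expand {A : Type*} [AddCommGroup A] (D : CycDat A) (x : A) (hx : TorEl x)
    (k : D.ι → ℤ) (hk : ∀ i, D.c i x = k i) :
    x = ∑ i ∈ D.fin.elems, k i • D.a i := by
  have := D.dec
  rw [← sub_eq_zero]
  have hta : ∀ i, TorEl (D.a i) := fun i => ⟨((D.p i ^ D.e i : ℕ) : ℤ), by
    exact_mod_cast (pow_pos (D.hp i).pos _).ne', by rw [natCast_zsmul]; exact D.a_tor i⟩
  apply D.inj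
  · rw [sub_eq_add_neg, ← neg_one_zsmul]
    exact hx.add ((TorEl.sum _ _ fun i _ => (hta i).zsmul _).zsmul _)
  · intro i
    rw [map_sub, map_sum, Finset.sum_eq_single i]
    · rw [map_zsmul, D.c_self, hk]; simp
    · intro j _ hj
      rw [map_zsmul, D.c_ne i j hj.symm, smul_zero]
    · intro h
      exact absurd (D.fin.complete i) h

/-- A nonzero element of `ℤ/p^e` has a multiple equal to `p^(e-1)`. -/
theorem zmod_mult (p e : ℕ) (hp : p.Prime) (z : ZMod (p ^ e)) (hz : z ≠ 0) :
    ∃ m : ℤ, m • z = ((p ^ (e - 1) : ℕ) : ZMod (p ^ e)) := by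
  obtain ⟨k, rfl⟩ := ZMod.intCast_surjective z
  have hk : ¬ ((p ^ e : ℕ) : ℤ) ∣ k := by rwa [← ZMod.intCast_zmod_eq_zero_iff_dvd] 
  -- gcd of `k` and `p^e` is `p^t` with `t < e`
  obtain ⟨t, hte, ht⟩ := (Nat.dvd_prime_pow hp).1 (Int.gcd_dvd_natAbs_right k ((p ^ e : ℕ) : ℤ))
  have hlt : t < e := by
    rcases hte.lt_or_eq with h | h
    · exact h
    · subst h
      exact absurd (ht ▸ Int.gcd_dvd_left k ((p ^ t : ℕ) : ℤ)) hk
  have hb := Int.gcd_eq_gcd_ab k ((p ^ e : ℕ) : ℤ)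
  rw [ht] at hb
  refine ⟨(p ^ (e - 1 - t) : ℕ) * Int.gcdA k ((p ^ e : ℕ) : ℤ), ?_⟩
  have h3 : p ^ (e - 1) = p ^ (e - 1 - t) * p ^ t := by rw [← pow_add]; congr 1; omega
  have hb' := congrArg (Int.cast : ℤ → ZMod (p ^ e)) hb
  have h0 : ((p ^ e : ℕ) : ZMod (p ^ e)) = 0 := ZMod.natCast_self _
  simp only [Int.cast_add, Int.cast_mul, Int.cast_natCast, h0, zero_mul, add_zero] at hb'
  rw [h3, zsmul_eq_mul, Nat.cast_mul, hb']
  simp only [Int.cast_mul, Int.cast_natCast]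
  ring

theorem zmod_pow_ne (p e : ℕ) (hp : p.Prime) (he : e ≠ 0) :
    ((p ^ (e - 1) : ℕ) : ZMod (p ^ e)) ≠ 0 := by
  rw [Ne, ZMod.natCast_eq_zero_iff, Nat.pow_dvd_pow_iff_le_right hp.one_lt]
  omega

/-- An element of `ℤ/p^e` killed by `p` is a multiple of `p^(e-1)`. -/
theorem zmod_socle (p e : ℕ) (hp : p.Prime) (he : e ≠ 0) (z : ZMod (p ^ e)) (hz : p • z = 0) :
    ∃ m : ℤ, z = m • ((p ^ (e - 1) : ℕ) : ZMod (p ^ e)) := by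
  obtain ⟨k, rfl⟩ := ZMod.intCast_surjective z
  have h1 : ((p ^ e : ℕ) : ℤ) ∣ p * k := by
    rw [← ZMod.intCast_zmod_eq_zero_iff_dvd]
    simpa using hz
  obtain ⟨r, hr⟩ := h1
  refine ⟨r, ?_⟩
  have : k = r * (p ^ (e - 1) : ℕ) := by
    have hp0 : (p : ℤ) ≠ 0 := by exact_mod_cast hp.ne_zero
    apply mul_left_cancel₀ hp0
    rw [hr]
    obtain ⟨d, rfl⟩ := Nat.exists_eq_succ_of_ne_zero he
    push_cast [pow_succ]
    ring
  rw [this]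
  simp

/-- Homomorphisms injective on torsion extend. -/
def TorExt {G : Type*} [AddCommGroup G] (H : AddSubgroup G) : Prop :=
  ∀ f : H →+ G, (∀ x : H, TorEl x → f x = 0 → x = 0) → f ∈ extSub H

theorem torExt {G : Type*} [AddCommGroup G] (H : AddSubgroup G) (hfg : H.FG)
    (hP : InP H) (D : CycDat H) : TorExt H := by
  intro f hf
  have hne : ∏ i ∈ D.fin.elems, ((D.p i ^ D.e i : ℕ) : ℤ) ≠ 0 :=
    Finset.prod_ne_zero_iff.2 fun i _ => by exact_mod_cast (pow_pos (D.hp i).pos _).ne'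
  refine ext_of_inj_tor H hfg hP _ hne ?_ f hf
  intro x hx
  refine D.inj _ (hx.zsmul _) fun i => ?_
  obtain ⟨r, hr⟩ := Finset.dvd_prod_of_mem (fun i => ((D.p i ^ D.e i : ℕ) : ℤ)) (D.fin.complete i)
  rw [hr, map_zsmul, zsmul_eq_mul, Int.cast_mul, Int.cast_natCast, ZMod.natCast_self]
  simp

theorem incl_mem {G : Type*} [AddCommGroup G] (H : AddSubgroup G) : H.subtype ∈ extSub H :=
  ⟨AddMonoidHom.id G, fun _ => rfl⟩

theorem ext_of_kill {G : Type*} [AddCommGroup G] {H : AddSubgroup G} (hT : TorExt H)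
    (f : H →+ G) (hf : ∀ x : H, TorEl x → f x = 0) : f ∈ extSub H := by
  have h1 : f + H.subtype ∈ extSub H := by
    apply hT
    intro x hx h0
    rw [AddMonoidHom.add_apply, hf x hx, zero_add] at h0
    exact Subtype.ext h0
  have := sub_mem h1 (incl_mem H)
  simpa using this

section main
variable {G : Type*} [AddCommGroup G] {H : AddSubgroup G}

theorem coe_a_tor (D : CycDat H) (i : D.ι) : D.p i ^ D.e i • (D.a i : G) = 0 := by
  rw [← AddSubgroup.coe_nsmul, D.a_tor]; rfl

/-- `f` agrees on torsion with the sum of its components. -/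
theorem ext_expand (hT : TorExt H) (D : CycDat H) (f : H →+ G) :
    f - ∑ i ∈ D.fin.elems, cF (D.c i) (f (D.a i)) ∈ extSub H := by
  apply ext_of_kill hT
  intro x hx
  choose k hk using fun i => ZMod.intCast_surjective (D.c i x)
  have h1 := congrArg f (D.expand x hx k fun i => (hk i).symm)
  rw [map_sum] at h1
  rw [AddMonoidHom.sub_apply, AddMonoidHom.finsetSum_apply, sub_eq_zero]
  rw [h1]
  refine Finset.sum_congr rfl fun i _ => ?_
  rw [map_zsmul, cF_apply _ _ (by rw [← map_nsmul, D.a_tor, map_zero]) x (k i) (hk i).symm]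

theorem good (hT : TorExt H) (D : CycDat H) (j : D.ι) (he : D.e j ≠ 0) (y : G)
    (hy : D.p j ^ D.e j • y = 0)
    (hx : ∀ x : H, (x : G) = D.p j ^ (D.e j - 1) • y → D.c j x = 0) :
    cF (D.c j) y ∈ extSub H := by
  have h1 : cF (D.c j) y + H.subtype ∈ extSub H := by
    apply hT
    intro x _ h0
    rw [AddMonoidHom.add_apply] at h0
    by_cases hc : D.c j x = 0
    · rw [cF_apply _ _ hy x 0 (by simpa using hc), zero_smul, zero_add] at h0
      exact Subtype.ext h0
    · exfalso
      obtain ⟨m, hm⟩ := zmod_mult _ _ (D.hp j) _ hc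
      have h2 : cF (D.c j) y (m • x) + H.subtype (m • x) = 0 := by
        rw [map_zsmul, map_zsmul, ← smul_add, h0, smul_zero]
      rw [cF_apply _ _ hy (m • x) ((D.p j ^ (D.e j - 1) : ℕ) : ℤ)
        (by rw [map_zsmul, hm, Int.cast_natCast]), natCast_zsmul] at h2
      have h3 := hx (-(m • x)) (by
        rw [AddSubgroup.coe_neg]
        exact (eq_neg_of_add_eq_zero_left h2).symm)
      rw [map_neg, map_zsmul, hm, neg_eq_zero] at h3
      exact zmod_pow_ne _ _ (D.hp j) he h3
  have := sub_mem h1 (incl_mem H)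
  simpa using this

theorem pow_pred_smul (p e : ℕ) (he : e ≠ 0) (y : G) : p • p ^ (e - 1) • y = p ^ e • y := by
  rw [← mul_smul, ← pow_succ']
  congr 2
  omega

theorem c_socle_ne (D : CycDat H) (i j : D.ι) (hij : i ≠ j) (n : ℕ) :
    D.c i (n • D.a j) = 0 := by
  rw [map_nsmul, D.c_ne i j hij, smul_zero]

theorem self_of (hT : TorExt H) (D : CycDat H) (j : D.ι) (he : D.e j ≠ 0) (y : G)
    (hy : D.p j ^ (D.e j - 1) • y = D.p j ^ (D.e j - 1) • (D.a j : G))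
    (hE : cF (D.c j) y ∈ extSub H) : cF (D.c j) (D.a j : G) ∈ extSub H := by
  have ha := coe_a_tor D j
  have hy0 : D.p j ^ D.e j • y = 0 := by
    rw [← pow_pred_smul _ _ he, hy, pow_pred_smul _ _ he, ha]
  have h0 : D.p j ^ D.e j • ((D.a j : G) - y) = 0 := by rw [smul_sub, hy0, ha, sub_zero]
  have h1 : cF (D.c j) ((D.a j : G) - y) ∈ extSub H := by
    apply good hT D j he _ h0
    intro x hx
    rw [smul_sub, hy, sub_self] at hx
    have : x = 0 := Subtype.ext hx
    rw [this, map_zero]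
  have := add_mem hE h1
  rw [← cF_add _ _ _ hy0 h0] at this
  simpa using this

theorem all_of (hT : TorExt H) (D : CycDat H) (j : D.ι)
    (hE : cF (D.c j) (D.a j : G) ∈ extSub H) (y : G) (hy : D.p j ^ D.e j • y = 0) :
    cF (D.c j) y ∈ extSub H := by
  by_cases he : D.e j = 0
  · have : y = 0 := by simpa [he] using hy
    rw [this, show (0 : G) = (0 : ℤ) • (0 : G) by simp, cF_zsmul _ _ (by simp), zero_smul]
    exact zero_mem _
  by_cases hx : ∃ x : H, (x : G) = D.p j ^ (D.e j - 1) • y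
  · obtain ⟨x, hx⟩ := hx
    have hpx : D.p j • x = 0 := by
      apply Subtype.ext
      rw [AddSubgroup.coe_nsmul, hx, pow_pred_smul _ _ he, hy]; rfl
    obtain ⟨m, hm⟩ := zmod_socle _ _ (D.hp j) he (D.c j x) (by rw [← map_nsmul, hpx, map_zero])
    have ha := coe_a_tor D j
    have hma : D.p j ^ D.e j • (m • (D.a j : G)) = 0 := by rw [smul_comm, ha, smul_zero]
    have h0 : D.p j ^ D.e j • (y - m • (D.a j : G)) = 0 := by rw [smul_sub, hy, hma, sub_zero]
    have h1 : cF (D.c j) (y - m • (D.a j : G)) ∈ extSub H := by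
      apply good hT D j he _ h0
      intro z hz
      have : z = x - m • (D.p j ^ (D.e j - 1) • D.a j) := by
        apply Subtype.ext
        rw [hz, smul_sub, AddSubgroup.coe_sub, hx, AddSubgroup.coe_zsmul, AddSubgroup.coe_nsmul,
          smul_comm m]
      rw [this, map_sub, map_zsmul, map_nsmul, D.c_self, hm]
      simp
    have := add_mem h1 ((extSub H).zsmul_mem hE m)
    rw [← cF_zsmul _ _ ha, ← cF_add _ _ _ h0 hma] at this
    simpa using this
  · exact good hT D j he y hy fun x h => absurd ⟨x, h⟩ hx

theorem finite_height (hT : TorExt H) (D : CycDat H) (i : D.ι) (he : D.e i ≠ 0)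
    (hh : ∃ n : ℕ, ¬ ∃ d : G, D.p i ^ n • d = D.p i ^ (D.e i - 1) • (D.a i : G)) :
    cF (D.c i) (D.a i : G) ∈ extSub H := by
  classical
  obtain ⟨h, hn, c, hc⟩ : ∃ h : ℕ,
      (¬ ∃ d : G, D.p i ^ (h + 1) • d = D.p i ^ (D.e i - 1) • (D.a i : G)) ∧
      ∃ d : G, D.p i ^ h • d = D.p i ^ (D.e i - 1) • (D.a i : G) := by
    by_contra! hcon
    obtain ⟨n, hn⟩ := hh
    apply hn
    clear hn
    induction n with
    | zero => exact ⟨_, by rw [pow_zero, one_smul]⟩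
    | succ n ih =>
      by_contra hd
      obtain ⟨d, hd'⟩ := ih
      exact hcon n (by simpa using hd) d hd'
  have hps : D.p i • D.p i ^ (D.e i - 1) • (D.a i : G) = 0 := by
    rw [pow_pred_smul _ _ he, coe_a_tor]
  have hcN : ((D.p i ^ (h + 1) : ℕ) : ℤ) • c = 0 := by
    rw [natCast_zsmul, pow_succ', mul_smul, hc, hps]
  obtain ⟨π, hπs, hπ⟩ := exists_proj (D.p i) (D.hp i) _ hps h c hc hn
  have hd := D.dec
  have hother : ∀ j, j ≠ i → cF (D.c j) (π (D.a j)) ∈ extSub H := by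
    intro j hj
    obtain ⟨k, hk⟩ := hπ (D.a j)
    have hkill : D.p j ^ D.e j • π (D.a j) = 0 := by rw [← map_nsmul, coe_a_tor, map_zero]
    by_cases hej : D.e j = 0
    · have : π (D.a j) = 0 := by simpa [hej] using hkill
      rw [this, show (0 : G) = (0 : ℤ) • (0 : G) by simp, cF_zsmul _ _ (by simp), zero_smul]
      exact zero_mem _
    apply good hT D j hej _ hkill
    intro x hx
    by_cases hpp : D.p j = D.p i
    · -- same prime
      obtain ⟨r, hr⟩ := hπ (D.p j ^ (D.e j - 1) • (D.a j : G))
      have h1 : (D.p i : ℤ) • r • c = 0 := by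
        rw [← hr, natCast_zsmul, ← map_nsmul, ← hpp, pow_pred_smul _ _ hej, coe_a_tor, map_zero]
      have h2 : ∃ t : ℤ, r • c = t • D.p i ^ h • c := by
        by_cases hdv : ((D.p i ^ h : ℕ) : ℤ) ∣ r
        · obtain ⟨t, rfl⟩ := hdv
          exact ⟨t, by rw [mul_comm, mul_smul, natCast_zsmul]⟩
        · exfalso
          have hord : addOrderOf c = D.p i ^ (h + 1) := by
            have := Fact.mk (D.hp i)
            refine addOrderOf_eq_prime_pow ?_ ?_
            · intro h0
              rw [hc] at h0
              exact hn ⟨0, by rw [smul_zero, h0]⟩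
            · rw [← natCast_zsmul]; exact hcN
          rw [← mul_smul, ← addOrderOf_dvd_iff_zsmul_eq_zero, hord, pow_succ', Nat.cast_mul] at h1
          exact hdv (Int.dvd_of_mul_dvd_mul_left (by exact_mod_cast (D.hp i).ne_zero) h1)
      obtain ⟨t, ht⟩ := h2
      have hx2 : x = t • (D.p i ^ (D.e i - 1)) • D.a i := by
        apply Subtype.ext
        rw [hx, ← map_nsmul, hr, ht, hc, AddSubgroup.coe_zsmul, AddSubgroup.coe_nsmul]
      rw [hx2, map_zsmul, c_socle_ne D j i hj, smul_zero]
    · -- different primes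
      have hcop : IsCoprime ((D.p j ^ D.e j : ℕ) : ℤ) ((D.p i ^ (h + 1) : ℕ) : ℤ) :=
        Nat.isCoprime_iff_coprime.2 (Nat.Coprime.pow _ _ ((Nat.coprime_primes (D.hp j) (D.hp i)).2 hpp))
      obtain ⟨u, v, huv⟩ := hcop
      have hz : π (D.a j) = 0 := by
        rw [← one_zsmul (π (D.a j)), ← huv, add_smul, mul_smul, mul_smul, natCast_zsmul, hkill,
          hk, smul_comm _ k c, hcN]
        simp
      have : x = 0 := by
        apply Subtype.ext
        rw [hx, hz, smul_zero]; rfl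
      rw [this, map_zero]
  have hπE : π.comp H.subtype ∈ extSub H := ⟨π, fun x => rfl⟩
  have h1 := sub_mem hπE (ext_expand hT D (π.comp H.subtype))
  rw [sub_sub_cancel, ← Finset.add_sum_erase _ _ (D.fin.complete i)] at h1
  have h2 : ∑ j ∈ D.fin.elems.erase i, cF (D.c j) ((π.comp H.subtype) (D.a j)) ∈ extSub H :=
    sum_mem fun j hj => hother j (Finset.ne_of_mem_erase hj)
  have h3 := (AddSubgroup.add_mem_cancel_right _ h2).1 h1
  refine self_of hT D i he _ ?_ h3
  rw [← map_nsmul]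
  change π (D.p i ^ (D.e i - 1) • (D.a i : G)) = _
  exact hπs

theorem infinite_height (hT : TorExt H) (D : CycDat H) (i j : D.ι) (hij : i ≠ j)
    (hei : D.e i ≠ 0) (hpp : D.p i = D.p j) (hle : D.e i ≤ D.e j) (c : G)
    (hc : D.p j ^ (D.e j - 1) • c = D.p i ^ (D.e i - 1) • (D.a i : G)) :
    cF (D.c j) (D.a j : G) ∈ extSub H := by
  have hej : D.e j ≠ 0 := by omega
  have hcN : D.p j ^ D.e j • c = 0 := by
    rw [← pow_pred_smul _ _ hej, hc, ← hpp, pow_pred_smul _ _ hei, coe_a_tor]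
  have h1 : cF (D.c j) c ∈ extSub H := by
    apply good hT D j hej _ hcN
    intro x hx
    have : x = D.p i ^ (D.e i - 1) • D.a i := by
      apply Subtype.ext
      rw [hx, hc, AddSubgroup.coe_nsmul]
    rw [this, c_socle_ne D j i hij.symm]
  have hy : D.p i ^ D.e i • (D.p j ^ (D.e j - D.e i) • (D.a j : G)) = 0 := by
    rw [hpp, ← mul_smul, ← pow_add, Nat.add_sub_cancel' hle, coe_a_tor]
  have hy1 : D.p i ^ (D.e i - 1) • (D.p j ^ (D.e j - D.e i) • (D.a j : G)) =
      D.p j ^ (D.e j - 1) • (D.a j : G) := by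
    rw [hpp, ← mul_smul, ← pow_add]
    congr 2
    omega
  have h2 : cF (D.c i) (D.p j ^ (D.e j - D.e i) • (D.a j : G)) ∈ extSub H := by
    apply good hT D i hei _ hy
    intro x hx
    have : x = D.p j ^ (D.e j - 1) • D.a j := by
      apply Subtype.ext
      rw [hx, hy1, AddSubgroup.coe_nsmul]
    rw [this, c_socle_ne D i j hij]
  obtain ⟨g, hg⟩ := h2
  obtain ⟨g1, hg1⟩ := h1
  have hga : g (D.a i) = D.p j ^ (D.e j - D.e i) • (D.a j : G) := by
    rw [hg, cF_apply _ _ hy _ 1 (by rw [D.c_self, Int.cast_one]), one_smul]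
  refine self_of hT D j hej (g c) ?_ ⟨g.comp g1, fun x => ?_⟩
  · rw [← map_nsmul, hc, map_nsmul, hga, hy1]
  · obtain ⟨k, hk⟩ := ZMod.intCast_surjective (D.c j x)
    rw [AddMonoidHom.comp_apply, hg1, cF_apply _ _ hcN x k hk.symm,
      cF_apply _ _ (by rw [← map_nsmul, hcN, map_zero]) x k hk.symm, map_zsmul]

theorem all_self (hT : TorExt H) (D : CycDat H) (i : D.ι) :
    cF (D.c i) (D.a i : G) ∈ extSub H := by
  classical
  by_contra hi
  have key : ∀ j, cF (D.c j) (D.a j : G) ∉ extSub H → D.e j ≠ 0 ∧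
      ∀ n : ℕ, ∃ d : G, D.p j ^ n • d = D.p j ^ (D.e j - 1) • (D.a j : G) := by
    intro j hj
    have he : D.e j ≠ 0 := by
      intro he
      apply hj
      have : (D.a j : G) = 0 := by simpa [he] using coe_a_tor D j
      rw [this, show (0 : G) = (0 : ℤ) • (0 : G) by simp, cF_zsmul _ _ (by simp), zero_smul]
      exact zero_mem _
    refine ⟨he, ?_⟩
    by_contra hh
    exact hj (finite_height hT D j he (not_forall.1 hh))
  -- all other indices with the same prime are fine
  have hsame : ∀ j, j ≠ i → D.p j = D.p i → cF (D.c j) (D.a j : G) ∈ extSub H := by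
    intro j hji hpp
    by_contra hj
    obtain ⟨hei, hhi⟩ := key i hi
    obtain ⟨hej, hhj⟩ := key j hj
    rcases le_total (D.e i) (D.e j) with hle | hle
    · obtain ⟨d, hd⟩ := hhi (D.e j - 1)
      exact hj (infinite_height hT D i j hji.symm hei hpp.symm hle d (by rw [hpp]; exact hd))
    · obtain ⟨d, hd⟩ := hhj (D.e i - 1)
      exact hi (infinite_height hT D j i hji hej hpp hle d (by rw [← hpp]; exact hd))
  -- an integer killing the parts at other primes
  obtain ⟨m, hm1, hm2⟩ : ∃ m : ℤ, m • (D.a i : G) = D.a i ∧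
      ∀ j, D.p j ≠ D.p i → m • (D.a j : G) = 0 := by
    set S := D.fin.elems.filter fun j => D.p j ≠ D.p i
    have hcop : IsCoprime ((D.p i ^ D.e i : ℕ) : ℤ) (∏ j ∈ S, ((D.p j ^ D.e j : ℕ) : ℤ)) := by
      apply IsCoprime.prod_right
      intro j hj
      have hpp := (Finset.mem_filter.1 hj).2
      exact Nat.isCoprime_iff_coprime.2
        (Nat.Coprime.pow _ _ ((Nat.coprime_primes (D.hp i) (D.hp j)).2 hpp.symm))
    obtain ⟨u, v, huv⟩ := hcop
    refine ⟨v * ∏ j ∈ S, ((D.p j ^ D.e j : ℕ) : ℤ), ?_, ?_⟩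
    · rw [eq_sub_of_add_eq' huv, sub_smul, mul_smul, natCast_zsmul, coe_a_tor]
      simp
    · intro j hj
      obtain ⟨r, hr⟩ := Finset.dvd_prod_of_mem (fun j => ((D.p j ^ D.e j : ℕ) : ℤ))
        (Finset.mem_filter.2 ⟨D.fin.complete j, hj⟩ : j ∈ S)
      rw [hr, mul_left_comm, mul_comm, mul_smul, natCast_zsmul, coe_a_tor, smul_zero]
  have hE : m • H.subtype ∈ extSub H := (extSub H).zsmul_mem (incl_mem H) m
  have h1 := sub_mem hE (ext_expand hT D (m • H.subtype))
  rw [sub_sub_cancel, ← Finset.add_sum_erase _ _ (D.fin.complete i)] at h1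
  have h2 : ∑ j ∈ D.fin.elems.erase i, cF (D.c j) ((m • H.subtype) (D.a j)) ∈ extSub H := by
    refine sum_mem fun j hj => ?_
    change cF (D.c j) (m • (D.a j : G)) ∈ extSub H
    rw [cF_zsmul _ _ (coe_a_tor D j)]
    by_cases hpp : D.p j = D.p i
    · exact (extSub H).zsmul_mem (hsame j (Finset.ne_of_mem_erase hj) hpp) m
    · rw [← cF_zsmul _ _ (coe_a_tor D j), hm2 j hpp, show (0 : G) = (0 : ℤ) • (0 : G) by simp,
        cF_zsmul _ _ (by simp), zero_smul]
      exact zero_mem _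
  have h3 := (AddSubgroup.add_mem_cancel_right _ h2).1 h1
  apply hi
  have h4 : (m • H.subtype) (D.a i) = (D.a i : G) := hm1
  rwa [h4] at h3

end main

theorem stmt19 {G : Type*} [AddCommGroup G] (H : AddSubgroup G) (hfg : H.FG)
    (hP : InP H) : InQ H := by
  have := (AddGroup.fg_iff_addSubgroup_fg H).2 hfg
  obtain ⟨D⟩ := exists_cycDat H
  have hT := torExt H hfg hP D
  intro f
  have h1 : ∑ i ∈ D.fin.elems, cF (D.c i) (f (D.a i)) ∈ extSub H :=
    sum_mem fun i _ => all_of hT D i (all_self hT D i) _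
      (by rw [← map_nsmul, D.a_tor, map_zero])
  have h2 := add_mem (ext_expand hT D f) h1
  rw [sub_add_cancel] at h2
  exact h2
end
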